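/- Let S ⊆ ℝ² be a finite set whose pairwise distances are all distinct. For every pair φ = (a,b) ∈ Φ* = Φ(S, L_C) \ Φ(S, ℋ), letting p be the vertex of the smallest W-translate containing {a,b}, the following hold: p ∉ {a,b}; one of a,b lies on the branch p + r and the other lies on the branch p + r'; and (a,b) is a closest pair of S ∩ C_p. -/

import Mathlib

/-!
The linear coordinates `u(z) = z 1` and `v(z) = z 0 - α * z 1` turn `W_p` into the quadrant
`u ≥ u(p) ∧ v ≥ v(p)` and `C_p` into the union of the two closed halfplanes `u ≤ u(p)` and
`v ≤ v(p)`. The smallest `W`-translate containing `{a, b}` therefore has its vertex `p` at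
`u(p) = min (u a) (u b)`, `v(p) = min (v a) (v b)`.

Suppose `(a, b)` is a closest pair of `S ∩ C_q`. If both points were in the same one of the two
halfplanes making up `C_q`, then, that halfplane being contained in `C_q`, the pair would be a
candidate pair for halfplanes. So one point, say `a`, has `u(a) ≤ u(q)` and `v(a) > v(q)`, and
the other has `v(b) ≤ v(q)` and `u(b) > u(q)`. Hence `p = (u(a), v(b))`, with `u(a) < u(b)` and
`v(b) < v(a)`: `a` lies on `p + r`, `b` on `p + r'`, and neither is `p`. Moreover
`u(p) ≤ u(q)` and `v(p) ≤ v(q)`, so `C_p ⊆ C_q`, and `(a, b)` is a closest pair of `S ∩ C_p`.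
-/

open EuclideanGeometry

noncomputable section

/-- The Euclidean plane `ℝ²`. -/
abbrev Pt := EuclideanSpace ℝ (Fin 2)

/-- The translate `Γ_p = p + Γ` of a set `Γ ⊆ ℝ²`. -/
def tr (p : Pt) (Γ : Set Pt) : Set Pt := (p + ·) '' Γ
/-- `(a, b)` is a closest pair of the set `T`: `a, b` are distinct points of `T` whose distance
is at most the distance between any two distinct points of `T`. -/
def IsClosestPair (T : Set Pt) (a b : Pt) : Prop :=
  a ∈ T ∧ b ∈ T ∧ a ≠ b ∧ ∀ x ∈ T, ∀ y ∈ T, x ≠ y → dist a b ≤ dist x y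

/-- `Φ(S, 𝒳)`: the set of candidate pairs of `S` with respect to the family of ranges `𝒳`,
i.e. pairs that are a closest pair of `S ∩ X` for some `X ∈ 𝒳`. -/
def CandPairs (S : Set Pt) (𝒳 : Set (Set Pt)) : Set (Pt × Pt) :=
  {φ | ∃ X ∈ 𝒳, IsClosestPair (S ∩ X) φ.1 φ.2}

/-- `L_Γ`: the collection of all translates of `Γ`. -/
def Translates (Γ : Set Pt) : Set (Set Pt) := {X | ∃ p : Pt, X = tr p Γ}

/-- The segments `[a,b]` and `[a',b']` cross: the open segments have a common point. -/
def SegCross (a b a' b' : Pt) : Prop :=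
  (openSegment ℝ a b ∩ openSegment ℝ a' b').Nonempty

/-- All pairwise distances of points of `S` are distinct. -/
def DistinctDists (S : Set Pt) : Prop :=
  ∀ a ∈ S, ∀ b ∈ S, ∀ c ∈ S, ∀ d ∈ S,
    a ≠ b → c ≠ d → dist a b = dist c d → ({a, b} : Set Pt) = {c, d}

/-- No three points of `S` are collinear. -/
def NoThreeCollinear (S : Set Pt) : Prop :=
  ∀ a ∈ S, ∀ b ∈ S, ∀ c ∈ S, a ≠ b → a ≠ c → b ≠ c →
    ¬ Collinear ℝ ({a, b, c} : Set Pt)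
/-- `tr p W` is the smallest `W`-translate (under inclusion) containing the set `A`. -/
def IsSmallestTrans (W A : Set Pt) (p : Pt) : Prop :=
  A ⊆ tr p W ∧ ∀ q : Pt, A ⊆ tr q W → tr p W ⊆ tr q W
/-- A closed halfplane in `ℝ²`. -/
def IsClosedHalfplane (H : Set Pt) : Prop :=
  ∃ (f : Pt →ₗ[ℝ] ℝ) (c : ℝ), f ≠ 0 ∧ H = {x | f x ≤ c}
/-- The point `(x, y) ∈ ℝ²`. -/
def pt2 (x y : ℝ) : Pt := (EuclideanSpace.equiv (Fin 2) ℝ).symm ![x, y]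

/-- The co-wedge `C = {(x,y) : y ≤ 0} ∪ {(x,y) : x ≤ αy}`, with vertex at the origin. -/
def coWedge (α : ℝ) : Set Pt := {z | z 1 ≤ 0 ∨ z 0 ≤ α * z 1}

/-- The complementary wedge `W = {(x,y) : y ≥ 0} ∩ {(x,y) : x ≥ αy}`. -/
def compWedge (α : ℝ) : Set Pt := {z | 0 ≤ z 1 ∧ α * z 1 ≤ z 0}

/-- The branch `r = {(t, 0) : t ≥ 0}`. -/
def rBr : Set Pt := {z | ∃ t : ℝ, 0 ≤ t ∧ z = pt2 t 0}

/-- The branch `r' = {(αt, t) : t ≥ 0}`. -/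
def r'Br (α : ℝ) : Set Pt := {z | ∃ t : ℝ, 0 ≤ t ∧ z = pt2 (α * t) t}

/-- `ℋ`: the family of all closed halfplanes in `ℝ²`. -/
def Halfplanes : Set (Set Pt) := {H | IsClosedHalfplane H}

/-- `Φ* = Φ(S, L_C) \ Φ(S, ℋ)`. -/
def PhiStar (α : ℝ) (S : Set Pt) : Set (Pt × Pt) :=
  CandPairs S (Translates (coWedge α)) \ CandPairs S Halfplanes

/-- `x` is the `r`-point of the pair `φ`: `x` is one of the two points of `φ` and lies on the
branch `p + r` of the smallest `W`-translate containing the two points of `φ`. -/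
def IsRPoint (α : ℝ) (φ : Pt × Pt) (x : Pt) : Prop :=
  x ∈ ({φ.1, φ.2} : Set Pt) ∧
    ∃ p : Pt, IsSmallestTrans (compWedge α) {φ.1, φ.2} p ∧ x ∈ tr p rBr

/-- `x` is the `r'`-point of the pair `φ`: `x` is one of the two points of `φ` and lies on the
branch `p + r'` of the smallest `W`-translate containing the two points of `φ`. -/
def IsR'Point (α : ℝ) (φ : Pt × Pt) (x : Pt) : Prop :=
  x ∈ ({φ.1, φ.2} : Set Pt) ∧
    ∃ p : Pt, IsSmallestTrans (compWedge α) {φ.1, φ.2} p ∧ x ∈ tr p (r'Br α)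

lemma mem_tr_iff (p z : Pt) (Γ : Set Pt) : z ∈ tr p Γ ↔ z - p ∈ Γ := by
  constructor
  · rintro ⟨w, hw, rfl⟩
    simpa using hw
  · intro h
    exact ⟨z - p, h, by simp⟩

@[simp] lemma pt2_zero (x y : ℝ) : pt2 x y 0 = x := by simp [pt2]

@[simp] lemma pt2_one (x y : ℝ) : pt2 x y 1 = y := by simp [pt2]

lemma pt_ext {z w : Pt} (h0 : z 0 = w 0) (h1 : z 1 = w 1) : z = w := by
  ext i
  fin_cases i
  · exact h0
  · exact h1

/-- The second linear coordinate `v(z) = z 0 - α * z 1` of the plane (the first is `z 1`);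
it vanishes on the line through the branch `r'` of the wedge, just as `z 1` vanishes on `r`. -/
def vCoord (α : ℝ) : Pt →ₗ[ℝ] ℝ where
  toFun z := z 0 - α * z 1
  map_add' z w := by simp only [PiLp.add_apply]; ring
  map_smul' c z := by simp only [PiLp.smul_apply, smul_eq_mul, RingHom.id_apply]; ring

/-- The first linear coordinate `u(z) = z 1`. -/
def uCoord : Pt →ₗ[ℝ] ℝ where
  toFun z := z 1
  map_add' _ _ := rfl
  map_smul' _ _ := rfl

@[simp] lemma vCoord_apply (α : ℝ) (z : Pt) : vCoord α z = z 0 - α * z 1 := rfl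

@[simp] lemma uCoord_apply (z : Pt) : uCoord z = z 1 := rfl

lemma mem_compWedge_tr (α : ℝ) (p z : Pt) :
    z ∈ tr p (compWedge α) ↔ uCoord p ≤ uCoord z ∧ vCoord α p ≤ vCoord α z := by
  rw [mem_tr_iff]
  simp only [compWedge, Set.mem_ofPred_eq, PiLp.sub_apply, uCoord_apply, vCoord_apply]
  constructor <;> rintro ⟨h1, h2⟩ <;> constructor <;> linarith

lemma mem_coWedge_tr (α : ℝ) (p z : Pt) :
    z ∈ tr p (coWedge α) ↔ uCoord z ≤ uCoord p ∨ vCoord α z ≤ vCoord α p := by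
  rw [mem_tr_iff]
  simp only [coWedge, Set.mem_ofPred_eq, PiLp.sub_apply, uCoord_apply, vCoord_apply]
  constructor <;> rintro (h | h) <;> first | (left; linarith) | (right; linarith)

lemma mem_rBr_tr (α : ℝ) (p z : Pt) (hu : uCoord z = uCoord p)
    (hv : vCoord α p ≤ vCoord α z) : z ∈ tr p rBr := by
  rw [mem_tr_iff]
  simp only [uCoord_apply, vCoord_apply] at hu hv
  rw [hu] at hv
  refine ⟨z 0 - p 0, by linarith, pt_ext (by simp) (by simp [hu])⟩

lemma mem_r'Br_tr (α : ℝ) (p z : Pt) (hu : uCoord p ≤ uCoord z)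
    (hv : vCoord α z = vCoord α p) : z ∈ tr p (r'Br α) := by
  rw [mem_tr_iff]
  simp only [uCoord_apply, vCoord_apply] at hu hv
  refine ⟨z 1 - p 1, by linarith, pt_ext ?_ (by simp)⟩
  simp only [PiLp.sub_apply, pt2_zero]
  linarith

lemma smallestTrans_vertex {α : ℝ} {a b p : Pt}
    (hp : IsSmallestTrans (compWedge α) {a, b} p) :
    uCoord p = min (uCoord a) (uCoord b) ∧
      vCoord α p = min (vCoord α a) (vCoord α b) := by
  obtain ⟨hsub, hmin⟩ := hp
  have ha := (mem_compWedge_tr α p a).1 (hsub (by simp))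
  have hb := (mem_compWedge_tr α p b).1 (hsub (by simp))
  -- the point `q` with `u` and `v` coordinates equal to the two minima
  set m := min (uCoord a) (uCoord b) with hm
  set n := min (vCoord α a) (vCoord α b) with hn
  have hqu : uCoord (pt2 (n + α * m) m) = m := by simp
  have hqv : vCoord α (pt2 (n + α * m) m) = n := by simp
  have hq := hmin (pt2 (n + α * m) m) (by
    rintro z (rfl | rfl) <;> rw [mem_compWedge_tr, hqu, hqv]
    · exact ⟨min_le_left _ _, min_le_left _ _⟩
    · exact ⟨min_le_right _ _, min_le_right _ _⟩)
  have hpq := (mem_compWedge_tr α _ p).1 (hq ((mem_compWedge_tr α p p).2 ⟨le_rfl, le_rfl⟩))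
  rw [hqu, hqv] at hpq
  exact ⟨le_antisymm (le_min ha.1 hb.1) hpq.1, le_antisymm (le_min ha.2 hb.2) hpq.2⟩

lemma isClosestPair_mono {T T' : Set Pt} {a b : Pt} (h : IsClosestPair T a b) (hT : T' ⊆ T)
    (ha : a ∈ T') (hb : b ∈ T') : IsClosestPair T' a b :=
  ⟨ha, hb, h.2.2.1, fun x hx y hy => h.2.2.2 x (hT hx) y (hT hy)⟩

/-- A closest pair of `S ∩ X` lying in a halfplane `f ≤ c` contained in `X` is a candidate pair
with respect to halfplanes. -/
lemma candPairs_halfplane {S X : Set Pt} {φ : Pt × Pt} (h : IsClosestPair (S ∩ X) φ.1 φ.2)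
    {f : Pt →ₗ[ℝ] ℝ} (hf : f ≠ 0) {c : ℝ} (hX : {x | f x ≤ c} ⊆ X)
    (h1 : f φ.1 ≤ c) (h2 : f φ.2 ≤ c) : φ ∈ CandPairs S Halfplanes :=
  ⟨{x | f x ≤ c}, ⟨f, c, hf, rfl⟩,
    isClosestPair_mono h (Set.inter_subset_inter_right _ hX) ⟨h.1.1, h1⟩ ⟨h.2.1.1, h2⟩⟩

lemma uCoord_ne_zero : uCoord ≠ 0 := fun h => by
  simpa using LinearMap.congr_fun h (pt2 0 1)

lemma vCoord_ne_zero (α : ℝ) : vCoord α ≠ 0 := fun h => by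
  simpa using LinearMap.congr_fun h (pt2 1 0)

/-- For every pair `φ = (a,b) ∈ Φ* = Φ(S, L_C) \ Φ(S, ℋ)`, letting `p` be the
vertex of the smallest `W`-translate containing `{a, b}`: `p ∉ {a, b}`; one of `a, b` lies on
the branch `p + r` and the other on `p + r'`; and `(a, b)` is a closest pair of `S ∩ C_p`. -/
theorem stmt6 (α : ℝ) (S : Set Pt) (hS : S.Finite) (hdd : DistinctDists S)
    (φ : Pt × Pt) (hφ : φ ∈ PhiStar α S)
    (p : Pt) (hp : IsSmallestTrans (compWedge α) {φ.1, φ.2} p) :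
    p ∉ ({φ.1, φ.2} : Set Pt) ∧
    ((φ.1 ∈ tr p rBr ∧ φ.2 ∈ tr p (r'Br α)) ∨
      (φ.2 ∈ tr p rBr ∧ φ.1 ∈ tr p (r'Br α))) ∧
    IsClosestPair (S ∩ tr p (coWedge α)) φ.1 φ.2 := by
  obtain ⟨⟨X, ⟨q, rfl⟩, hcl⟩, hnot⟩ := hφ
  obtain ⟨a, b⟩ := φ
  obtain ⟨hpu, hpv⟩ := smallestTrans_vertex hp
  dsimp only at *
  have ha := (mem_coWedge_tr α q a).1 hcl.1.2
  have hb := (mem_coWedge_tr α q b).1 hcl.2.1.2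
  have hu : ¬ (uCoord a ≤ uCoord q ∧ uCoord b ≤ uCoord q) := fun h =>
    hnot (candPairs_halfplane hcl uCoord_ne_zero
      (fun x hx => (mem_coWedge_tr α q x).2 (Or.inl hx)) h.1 h.2)
  have hv : ¬ (vCoord α a ≤ vCoord α q ∧ vCoord α b ≤ vCoord α q) := fun h =>
    hnot (candPairs_halfplane hcl (vCoord_ne_zero α)
      (fun x hx => (mem_coWedge_tr α q x).2 (Or.inr hx)) h.1 h.2)
  have hple : uCoord p ≤ uCoord q ∧ vCoord α p ≤ vCoord α q := by
    rw [hpu, hpv, min_le_iff, min_le_iff]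
    tauto
  have hsub : S ∩ tr p (coWedge α) ⊆ S ∩ tr q (coWedge α) := by
    rintro x ⟨hxS, hx⟩
    refine ⟨hxS, (mem_coWedge_tr α q x).2 ?_⟩
    exact ((mem_coWedge_tr α p x).1 hx).imp (fun h => h.trans hple.1) (fun h => h.trans hple.2)
  -- `a` is on `p + r` and `b` on `p + r'`, or the other way round
  have hcase : (uCoord a = uCoord p ∧ vCoord α p < vCoord α a ∧
        vCoord α b = vCoord α p ∧ uCoord p < uCoord b) ∨
      (uCoord b = uCoord p ∧ vCoord α p < vCoord α b ∧
        vCoord α a = vCoord α p ∧ uCoord p < uCoord a) := by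
    rcases ha with ha | ha
    · have h1 := lt_of_not_ge fun h => hu ⟨ha, h⟩
      have h2 := hb.resolve_left h1.not_ge
      have h3 := lt_of_not_ge fun h => hv ⟨h, h2⟩
      rw [min_eq_left (ha.trans h1.le)] at hpu
      rw [min_eq_right (h2.trans h3.le)] at hpv
      rw [hpu, hpv]
      exact Or.inl ⟨rfl, h2.trans_lt h3, rfl, ha.trans_lt h1⟩
    · have h1 := lt_of_not_ge fun h => hv ⟨ha, h⟩
      have h2 := hb.resolve_right h1.not_ge
      have h3 := lt_of_not_ge fun h => hu ⟨h, h2⟩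
      rw [min_eq_left (ha.trans h1.le)] at hpv
      rw [min_eq_right (h2.trans h3.le)] at hpu
      rw [hpu, hpv]
      exact Or.inr ⟨rfl, ha.trans_lt h1, rfl, h2.trans_lt h3⟩
  refine ⟨?_, ?_, isClosestPair_mono hcl hsub
    ⟨hcl.1.1, (mem_coWedge_tr α p a).2 ?_⟩ ⟨hcl.2.1.1, (mem_coWedge_tr α p b).2 ?_⟩⟩
  · rintro (rfl | rfl) <;> rcases hcase with h | h
    · exact h.2.1.false
    · exact h.2.2.2.false
    · exact h.2.2.2.false
    · exact h.2.1.false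
  · exact hcase.imp
      (fun h => ⟨mem_rBr_tr α p a h.1 h.2.1.le, mem_r'Br_tr α p b h.2.2.2.le h.2.2.1⟩)
      (fun h => ⟨mem_rBr_tr α p b h.1 h.2.1.le, mem_r'Br_tr α p a h.2.2.2.le h.2.2.1⟩)
  · exact hcase.imp (fun h => h.1.le) (fun h => h.2.2.1.le)
  · exact hcase.symm.imp (fun h => h.1.le) (fun h => h.2.2.1.le)
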